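/- arXiv:1902.06817 — 8 statements merged into one kernel-verified Lean document; each statement's English description precedes it below -/
import Mathlib

section
/- Let y be a real number with y ≠ 1, and define a sequence (c_j)_{j≥0} of real numbers by c_0 = y and c_{j+1} = (c_j·y − 1)/(c_j + y − 2). Then for every j ≥ 0 one has c_j = (y + j)/(j + 1), and for every j ≥ 1 the quantity c_{j−1} + y − 2 equals ((j+1)/j)·(y − 1); in particular c_{j−1} + y − 2 ≠ 0 for all j ≥ 1, so the sequence is well defined. -/
/-- Closed form for the Diagonalize algorithm assignments at a join node ⊗:
if `y ≠ 1`, `c 0 = y` and `c (j+1) = (c j * y - 1)/(c j + y - 2)`, then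
`c j = (y + j)/(j + 1)` for all `j`, and for `j ≥ 1` one has
`c (j-1) + y - 2 = ((j+1)/j) * (y - 1) ≠ 0`. -/
theorem diagonalize_join_closed_form (y : ℝ) (hy : y ≠ 1) (c : ℕ → ℝ)
    (hc0 : c 0 = y)
    (hrec : ∀ j : ℕ, c (j + 1) = (c j * y - 1) / (c j + y - 2)) :
    (∀ j : ℕ, c j = (y + (j : ℝ)) / ((j : ℝ) + 1)) ∧
    (∀ j : ℕ, 1 ≤ j →
      c (j - 1) + y - 2 = (((j : ℝ) + 1) / (j : ℝ)) * (y - 1) ∧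
      c (j - 1) + y - 2 ≠ 0) := by
  have hy' : y - 1 ≠ 0 := sub_ne_zero.mpr hy
  have key : ∀ j : ℕ, c j = (y + (j : ℝ)) / ((j : ℝ) + 1) →
      c j + y - 2 = (((j : ℝ) + 1 + 1) / ((j : ℝ) + 1)) * (y - 1) := by
    intro j h
    have h1 : (j : ℝ) + 1 ≠ 0 := by positivity
    rw [h]
    field_simp
    ring
  have main : ∀ j : ℕ, c j = (y + (j : ℝ)) / ((j : ℝ) + 1) := by
    intro j
    induction j with
    | zero => simp [hc0]
    | succ k ih =>
      have h1 : (k : ℝ) + 1 ≠ 0 := by positivity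
      have h2 : (k : ℝ) + 1 + 1 ≠ 0 := by positivity
      have hnum : c k * y - 1 = (y - 1) * (y + ((k : ℝ) + 1)) / ((k : ℝ) + 1) := by
        rw [ih]
        field_simp
        ring
      rw [hrec, key k ih, hnum]
      push_cast
      field_simp
  refine ⟨main, ?_⟩
  intro j hj
  obtain ⟨k, rfl⟩ : ∃ k, j = k + 1 := ⟨j - 1, by omega⟩
  have h1 : (k : ℝ) + 1 ≠ 0 := by positivity
  have h2 : (k : ℝ) + 1 + 1 ≠ 0 := by positivity
  have hk := key k (main k)
  rw [Nat.add_sub_cancel]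
  refine ⟨by rw [hk]; push_cast; rfl, ?_⟩
  rw [hk]
  exact mul_ne_zero (div_ne_zero h2 h1) hy'
end

section
/- Fix a sequence of integers (a_k)_{k≥1} and an even index i. Define integers (x_n)_{n≥i} by x_i = 0 and, for n ≥ i, x_{n+1} = a_{n+1}·x_n if n is odd and x_{n+1} = a_{n+1}·x_n − a_{n+1} + 1 if n is even. Then for every j ≥ 1: x_{i+j} = Σ_{k=1}^{j} γ_{i+j,i+k}·(−1)^k + 1 if i+j is odd, and x_{i+j} = Σ_{k=1}^{j} γ_{i+j,i+k}·(−1)^k if i+j is even. -/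
/-- `gam a n l` is the product `a n * a (n-1) * ⋯ * a l`, i.e. γ_{n,l}. -/
def gam (a : ℕ → ℤ) (n l : ℕ) : ℤ := ∏ k ∈ Finset.Icc l n, a k

/-- Solution of the inverse Diagonalize recurrence started from value `0` at an
even level `i`: with `x i = 0` and `x (n+1) = a (n+1) * x n` for odd `n`,
`x (n+1) = a (n+1) * x n - a (n+1) + 1` for even `n`, one has for every `j ≥ 1`:
`x (i+j) = ∑_{k=1}^{j} γ_{i+j,i+k} (-1)^k + 1` if `i+j` is odd, and
`x (i+j) = ∑_{k=1}^{j} γ_{i+j,i+k} (-1)^k` if `i+j` is even. -/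
theorem recurrence_even_start (a : ℕ → ℤ) (i : ℕ) (hi : Even i)
    (x : ℕ → ℤ) (hx : x i = 0)
    (hrec : ∀ n : ℕ, i ≤ n → x (n + 1) =
      if Odd n then a (n + 1) * x n else a (n + 1) * x n - a (n + 1) + 1) :
    ∀ j : ℕ, 1 ≤ j →
      (Odd (i + j) →
        x (i + j) = (∑ k ∈ Finset.Icc 1 j, gam a (i + j) (i + k) * (-1) ^ k) + 1) ∧
      (Even (i + j) →
        x (i + j) = ∑ k ∈ Finset.Icc 1 j, gam a (i + j) (i + k) * (-1) ^ k) := by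
  have step : ∀ j : ℕ, (∑ k ∈ Finset.Icc 1 (j + 1), gam a (i + (j + 1)) (i + k) * (-1) ^ k)
      = a (i + j + 1) * (∑ k ∈ Finset.Icc 1 j, gam a (i + j) (i + k) * (-1) ^ k)
        + a (i + j + 1) * (-1) ^ (j + 1) := by
    intro j
    rw [Finset.sum_Icc_succ_top (by omega), Finset.mul_sum]
    congr 1
    · apply Finset.sum_congr rfl
      intro k hk
      rw [Finset.mem_Icc] at hk
      unfold gam
      rw [← add_assoc, Finset.prod_Icc_succ_top (by omega)]
      ring
    · simp [gam, add_assoc]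
  have main : ∀ j : ℕ,
      (Odd (i + j) →
        x (i + j) = (∑ k ∈ Finset.Icc 1 j, gam a (i + j) (i + k) * (-1) ^ k) + 1) ∧
      (Even (i + j) →
        x (i + j) = ∑ k ∈ Finset.Icc 1 j, gam a (i + j) (i + k) * (-1) ^ k) := by
    intro j
    induction j with
    | zero =>
      refine ⟨fun h => ?_, fun _ => by simpa using hx⟩
      exact absurd hi (Nat.not_even_iff_odd.mpr h)
    | succ j ih =>
      have hr := hrec (i + j) (by omega)
      rw [step j, ← add_assoc, hr]
      rcases Nat.even_or_odd (i + j) with he | ho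
      · have hj : Even j := (Nat.even_add.mp he).mp hi
        have hno : ¬ Odd (i + j) := Nat.not_odd_iff_even.mpr he
        refine ⟨fun _ => ?_, fun h => absurd h (by simpa [Nat.even_add_one] using he)⟩
        rw [if_neg hno, ih.2 he, hj.add_one.neg_one_pow]
        ring
      · have hj : Odd j := (Nat.odd_add'.mp ho).mpr hi
        refine ⟨fun h => absurd h (by simpa [Nat.odd_add_one] using ho), fun _ => ?_⟩
        rw [if_pos ho, ih.1 ho, hj.add_one.neg_one_pow]
        ring
  exact fun j _ => main j
end

section
/- Fix a sequence of integers (a_k)_{k≥1} and an odd index i. Define integers (x_n)_{n≥i} by x_i = 1 and, for n ≥ i, x_{n+1} = a_{n+1}·x_n if n is odd and x_{n+1} = a_{n+1}·x_n − a_{n+1} + 1 if n is even. Then for every j ≥ 1: x_{i+j} = Σ_{k=1}^{j} γ_{i+j,i+k}·(−1)^{k+1} + 1 if i+j is odd, and x_{i+j} = Σ_{k=1}^{j} γ_{i+j,i+k}·(−1)^{k+1} if i+j is even. -/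
/-- Solution of the inverse Diagonalize recurrence started from value `1` at an
odd level `i`: with `x i = 1` and `x (n+1) = a (n+1) * x n` for odd `n`,
`x (n+1) = a (n+1) * x n - a (n+1) + 1` for even `n`, one has for every `j ≥ 1`:
`x (i+j) = ∑_{k=1}^{j} γ_{i+j,i+k} (-1)^(k+1) + 1` if `i+j` is odd, and
`x (i+j) = ∑_{k=1}^{j} γ_{i+j,i+k} (-1)^(k+1)` if `i+j` is even. -/
theorem recurrence_odd_start (a : ℕ → ℤ) (i : ℕ) (hi : Odd i)
    (x : ℕ → ℤ) (hx : x i = 1)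
    (hrec : ∀ n : ℕ, i ≤ n → x (n + 1) =
      if Odd n then a (n + 1) * x n else a (n + 1) * x n - a (n + 1) + 1) :
    ∀ j : ℕ, 1 ≤ j →
      (Odd (i + j) →
        x (i + j) = (∑ k ∈ Finset.Icc 1 j, gam a (i + j) (i + k) * (-1) ^ (k + 1)) + 1) ∧
      (Even (i + j) →
        x (i + j) = ∑ k ∈ Finset.Icc 1 j, gam a (i + j) (i + k) * (-1) ^ (k + 1)) := by
  have hstep : ∀ j : ℕ,
      (∑ k ∈ Finset.Icc 1 (j + 1), gam a (i + (j + 1)) (i + k) * (-1) ^ (k + 1)) =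
      a (i + j + 1) * (∑ k ∈ Finset.Icc 1 j, gam a (i + j) (i + k) * (-1) ^ (k + 1))
        + a (i + j + 1) * (-1) ^ j := by
    intro j
    rw [Finset.sum_Icc_succ_top (by omega), Finset.mul_sum]
    congr 1
    · refine Finset.sum_congr rfl fun k hk => ?_
      have hk2 := (Finset.mem_Icc.mp hk).2
      unfold gam
      rw [← add_assoc, Finset.prod_Icc_succ_top (by omega)]
      ring
    · unfold gam
      rw [Finset.Icc_self, Finset.prod_singleton, ← add_assoc]
      ring
  have main : ∀ j : ℕ,
      (Odd (i + j) →
        x (i + j) = (∑ k ∈ Finset.Icc 1 j, gam a (i + j) (i + k) * (-1) ^ (k + 1)) + 1) ∧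
      (Even (i + j) →
        x (i + j) = ∑ k ∈ Finset.Icc 1 j, gam a (i + j) (i + k) * (-1) ^ (k + 1)) := by
    intro j
    induction j with
    | zero =>
      refine ⟨fun _ => by simp [hx], fun h => ?_⟩
      exact absurd hi (Nat.not_odd_iff_even.mpr h)
    | succ j ih =>
      have hr := hrec (i + j) (by omega)
      rw [hstep j]
      rcases Nat.even_or_odd (i + j) with h | h
      · have hj : Odd j := by
          by_contra hc
          exact Nat.not_odd_iff_even.mpr h (hi.add_even (Nat.not_odd_iff_even.mp hc))
        rw [if_neg (Nat.not_odd_iff_even.mpr h), ih.2 h] at hr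
        rw [hj.neg_one_pow]
        refine ⟨fun _ => ?_, fun h' => ?_⟩
        · rw [← add_assoc, hr]; ring
        · exact absurd h.add_one (Nat.not_odd_iff_even.mpr h')
      · have hj : Even j := by
          by_contra hc
          exact Nat.not_odd_iff_even.mpr (hi.add_odd (Nat.not_even_iff_odd.mp hc)) h
        rw [if_pos h, ih.1 h] at hr
        rw [hj.neg_one_pow]
        refine ⟨fun h' => ?_, fun _ => ?_⟩
        · exact absurd h' (Nat.not_odd_iff_even.mpr h.add_one)
        · rw [← add_assoc, hr]; ring
  exact fun j _ => main j
end

section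
/- Fix a sequence of integers (a_k)_{k≥1}, an index i ≥ 1, and an odd integer r with r > i. Define integers (x_n)_{n≥i} by x_i = 0 if i is even and x_i = 1 if i is odd, and for n ≥ i, x_{n+1} = a_{n+1}·x_n if n is odd and x_{n+1} = a_{n+1}·x_n − a_{n+1} + 1 if n is even. Then x_r = Σ_{k=1}^{r−i} γ_{r,i+k}·(−1)^k + 1 if i is even, and x_r = Σ_{k=1}^{r−i} γ_{r,i+k}·(−1)^{k+1} + 1 if i is odd. -/
theorem input_value_aux (a : ℕ → ℤ) (i : ℕ)
    (x : ℕ → ℤ) (hx : x i = if Even i then 0 else 1)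
    (hrec : ∀ n : ℕ, i ≤ n → x (n + 1) =
      if Odd n then a (n + 1) * x n else a (n + 1) * x n - a (n + 1) + 1) (d : ℕ) :
    x (i + d) = (∑ k ∈ Finset.Icc 1 d, gam a (i + d) (i + k) * (-1) ^ (i + k))
      + if Even (i + d) then 0 else 1 := by
  induction d with
  | zero => simpa using hx
  | succ d ih =>
    have hsum : ∑ k ∈ Finset.Icc 1 d, gam a (i + (d + 1)) (i + k) * (-1) ^ (i + k)
        = a (i + d + 1) * ∑ k ∈ Finset.Icc 1 d, gam a (i + d) (i + k) * (-1) ^ (i + k) := by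
      rw [Finset.mul_sum]
      refine Finset.sum_congr rfl fun k hk => ?_
      have hk2 := (Finset.mem_Icc.mp hk).2
      have : gam a (i + (d + 1)) (i + k) = gam a (i + d) (i + k) * a (i + d + 1) := by
        unfold gam
        rw [← add_assoc, Finset.prod_Icc_succ_top (by omega)]
      rw [this]; ring
    have hlast : gam a (i + (d + 1)) (i + (d + 1)) = a (i + d + 1) := by
      simp [gam, add_assoc]
    rw [Finset.sum_Icc_succ_top (by omega), hsum, hlast, ← add_assoc,
      hrec (i + d) (by omega), ih]
    rcases Nat.even_or_odd (i + d) with h | h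
    · have h1 : ¬ Odd (i + d) := Nat.not_odd_iff_even.mpr h
      have h2 : Odd (i + d + 1) := h.add_one
      have h3 : ¬ Even (i + d + 1) := Nat.not_even_iff_odd.mpr h2
      rw [if_neg h1, if_pos h, if_neg h3, h2.neg_one_pow]; ring
    · have h1 : ¬ Even (i + d) := Nat.not_even_iff_odd.mpr h
      have h2 : Even (i + d + 1) := h.add_one
      rw [if_pos h, if_neg h1, if_pos h2, h2.neg_one_pow]; ring

/-- For `r` odd with `r > i ≥ 1`, the input value `x_r^i` retrieved by the inverse
Diagonalize recurrence (started from `0` at an even level `i`, resp. `1` at an odd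
level `i`) satisfies `x r = ∑_{k=1}^{r-i} γ_{r,i+k} (-1)^k + 1` if `i` is even, and
`x r = ∑_{k=1}^{r-i} γ_{r,i+k} (-1)^(k+1) + 1` if `i` is odd. -/
theorem input_value_r_odd (a : ℕ → ℤ) (i r : ℕ) (hi : 1 ≤ i) (hr : Odd r) (hir : i < r)
    (x : ℕ → ℤ) (hx : x i = if Even i then 0 else 1)
    (hrec : ∀ n : ℕ, i ≤ n → x (n + 1) =
      if Odd n then a (n + 1) * x n else a (n + 1) * x n - a (n + 1) + 1) :
    (Even i →
      x r = (∑ k ∈ Finset.Icc 1 (r - i), gam a r (i + k) * (-1) ^ k) + 1) ∧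
    (Odd i →
      x r = (∑ k ∈ Finset.Icc 1 (r - i), gam a r (i + k) * (-1) ^ (k + 1)) + 1) := by
  have key := input_value_aux a i x hx hrec (r - i)
  rw [Nat.add_sub_cancel' hir.le, if_neg (Nat.not_even_iff_odd.mpr hr)] at key
  constructor
  · intro h
    rw [key]
    simp only [pow_add, h.neg_one_pow, one_mul]
  · intro h
    rw [key]
    simp only [pow_add, h.neg_one_pow, pow_one, neg_mul, mul_neg, one_mul, mul_one]
end

section
/- Let r ≥ 1 be odd and let a_1, …, a_r be integers with a_i ≥ 2 for all i. Let A be the real adjacency matrix of the graph G(a_1,…,a_r). Then the dimension of ker(A + I) equals a_1·a_2·⋯·a_{r−1}·(a_r − 1); that is, the multiplicity of the eigenvalue −1 of G(a_1,…,a_r) is a_1 a_2 ⋯ a_{r−1}(a_r − 1). -/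
/-- The cograph with balanced cotree `T_G(a_1,…,a_{r-1},0|0,…,0,a_r)`:
vertices are tuples `(v_1,…,v_r)` with `v_i ∈ {1,…,a_i}` (here indexed by `Fin r`,
coordinate `i : Fin r` corresponding to paper index `i+1`), two distinct tuples
being adjacent iff the least 1-based index at which they differ is odd
(equivalently, the least 0-based index is even). -/
def balG (r : ℕ) (a : ℕ → ℕ) :
    SimpleGraph ((i : Fin r) → Fin (a ((i : ℕ) + 1))) :=
  SimpleGraph.fromRel (fun u v => ∃ i : Fin r,
    u i ≠ v i ∧ Even (i : ℕ) ∧ ∀ j : Fin r, (j : ℕ) < (i : ℕ) → u j = v j)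

open scoped Classical in
/-- The real adjacency matrix of `balG r a`. -/
noncomputable def adjMat (r : ℕ) (a : ℕ → ℕ) :
    Matrix ((i : Fin r) → Fin (a ((i : ℕ) + 1))) ((i : Fin r) → Fin (a ((i : ℕ) + 1))) ℝ :=
  Matrix.of fun u v => if (balG r a).Adj u v then 1 else 0

open scoped Classical in
/-- Agreement on the first `k` coordinates, as a 0/1 matrix entry. -/
noncomputable def agr {r : ℕ} {a : ℕ → ℕ} (k : ℕ)
    (u v : (i : Fin r) → Fin (a ((i : ℕ) + 1))) : ℝ :=
  if (∀ j : Fin r, (j : ℕ) < k → u j = v j) then 1 else 0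

theorem alt_pos (n : ℕ) : ∀ g : ℕ → ℝ, (∀ k ≤ n, 0 < g k) → (∀ k < n, g (k+1) < g k) →
    0 < ∑ i ∈ Finset.range (n+1), (-1)^i * g i ∧
      ∑ i ∈ Finset.range (n+1), (-1)^i * g i ≤ g 0 := by
  induction n with
  | zero => intro g h _; simpa using h 0 le_rfl
  | succ n ih =>
    intro g h1 h2
    have := ih (fun k => g (k+1)) (fun k hk => h1 _ (by omega)) (fun k hk => h2 _ (by omega))
    rw [Finset.sum_range_succ']
    have e : ∑ i ∈ Finset.range (n+1), (-1:ℝ)^(i+1) * g (i+1)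
        = - ∑ i ∈ Finset.range (n+1), (-1:ℝ)^i * g (i+1) := by
      rw [← Finset.sum_neg_distrib]
      exact Finset.sum_congr rfl fun i _ => by ring
    rw [e]
    have h3 := h2 0 (by omega)
    simp only [zero_add] at this
    constructor <;> simp <;> linarith [this.1, this.2]

/-- Size of a block of depth `k`. -/
noncomputable def blk (r : ℕ) (a : ℕ → ℕ) (k : ℕ) : ℝ :=
  ∏ i : Fin r, if (i : ℕ) < k then (1:ℝ) else a ((i : ℕ) + 1)

theorem agr_comm {r : ℕ} {a : ℕ → ℕ} (k : ℕ)
    (u v : (i : Fin r) → Fin (a ((i : ℕ) + 1))) : agr k u v = agr k v u := by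
  unfold agr; congr 1; simp only [eq_comm]

theorem agr_mul {r : ℕ} {a : ℕ → ℕ} {j k : ℕ} (h : j ≤ k)
    (w u v : (i : Fin r) → Fin (a ((i : ℕ) + 1))) :
    agr j w u * agr k u v = agr j w v * agr k u v := by
  unfold agr
  by_cases h1 : ∀ j : Fin r, (j : ℕ) < k → u j = v j
  · have : (∀ i : Fin r, (i : ℕ) < j → w i = u i) ↔ (∀ i : Fin r, (i : ℕ) < j → w i = v i) := by
      constructor
      · intro h2 i hi
        rw [h2 i hi, h1 i (by omega)]
      · intro h2 i hi
        rw [h2 i hi, h1 i (by omega)]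
    simp only [this]
  · simp [h1]

theorem sum_agr {r : ℕ} {a : ℕ → ℕ} (k : ℕ)
    (v : (i : Fin r) → Fin (a ((i : ℕ) + 1))) : ∑ u, agr k u v = blk r a k := by
  classical
  unfold agr
  rw [Finset.sum_boole]
  have : (Finset.univ.filter fun u : (i : Fin r) → Fin (a ((i : ℕ) + 1)) =>
      ∀ j : Fin r, (j : ℕ) < k → u j = v j) =
      Fintype.piFinset (fun i : Fin r => if (i : ℕ) < k then {v i} else Finset.univ) := by
    ext u
    simp only [Finset.mem_filter, Finset.mem_univ, true_and, Fintype.mem_piFinset]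
    refine forall_congr' fun i => ?_
    split_ifs with h <;> simp [h]
  rw [this, Fintype.card_piFinset, Nat.cast_prod]
  unfold blk
  refine Finset.prod_congr rfl fun i _ => ?_
  split_ifs <;> simp

theorem blk_pos (r : ℕ) (a : ℕ → ℕ) (ha : ∀ k, 2 ≤ a k) (k : ℕ) : 0 < blk r a k := by
  unfold blk
  refine Finset.prod_pos fun i _ => ?_
  have := ha ((i:ℕ)+1)
  split_ifs
  · norm_num
  · exact_mod_cast (by omega : 0 < a ((i:ℕ)+1))

theorem blk_lt (r : ℕ) (a : ℕ → ℕ) (ha : ∀ k, 2 ≤ a k) (k : ℕ) (hk : k < r) :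
    blk r a (k+1) < blk r a k := by
  unfold blk
  have h2 : ∀ i : Fin r, (2:ℝ) ≤ a ((i:ℕ)+1) := fun i => by exact_mod_cast ha _
  refine Finset.prod_lt_prod (fun i _ => ?_) (fun i _ => ?_) ⟨⟨k, hk⟩, Finset.mem_univ _, ?_⟩
  · have := h2 i
    split_ifs <;> linarith
  · have := h2 i
    split_ifs <;> first | omega | linarith
  · have := h2 ⟨k, hk⟩
    simp at this ⊢
    omega

theorem entry (m : ℕ) (hm : Even m) (a : ℕ → ℕ)
    (u v : (i : Fin (m+1)) → Fin (a ((i : ℕ) + 1))) :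
    (adjMat (m+1) a + 1) u v = ∑ k ∈ Finset.range (m+1), (-1:ℝ)^k * agr k u v := by
  classical
  by_cases huv : u = v
  · subst huv
    have : ¬ Even (m+1) := by simpa [Nat.even_add_one] using hm
    simp [adjMat, agr, neg_one_geom_sum, this]
  · have hex : ∃ d, ∃ h : d < m+1, u ⟨d, h⟩ ≠ v ⟨d, h⟩ := by
      by_contra hc
      push Not at hc
      exact huv (funext fun i => hc i i.2)
    obtain ⟨hd, hne⟩ := Nat.find_spec hex
    have hmin : ∀ j : Fin (m+1), (j:ℕ) < Nat.find hex → u j = v j := by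
      intro j hj
      by_contra hc
      exact Nat.find_min hex hj ⟨j.2, hc⟩
    generalize Nat.find hex = d at hd hne hmin
    have hag : ∀ k, agr k u v = if k < d + 1 then 1 else 0 := by
      intro k
      unfold agr
      congr 1
      apply propext
      constructor
      · intro h
        by_contra hc
        exact hne (h ⟨d, hd⟩ (by simp; omega))
      · intro h j hj
        exact hmin j (by omega)
    have hsum : ∑ k ∈ Finset.range (m+1), (-1:ℝ)^k * agr k u v
        = ∑ k ∈ Finset.range (d+1), (-1:ℝ)^k := by
      simp only [hag, mul_ite, mul_one, mul_zero]
      rw [← Finset.sum_filter]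
      congr 1
      ext k
      simp
      omega
    have hadj : (balG (m+1) a).Adj u v ↔ Even d := by
      unfold balG
      rw [SimpleGraph.fromRel_adj]
      constructor
      · rintro ⟨_, ⟨i, h1, h2, h3⟩ | ⟨i, h1, h2, h3⟩⟩
        · have : (i:ℕ) = d := by
            by_contra hc
            rcases lt_or_gt_of_ne hc with h | h
            · exact h1 (hmin i h)
            · exact hne (h3 ⟨d, hd⟩ h)
          rwa [← this]
        · have : (i:ℕ) = d := by
            by_contra hc
            rcases lt_or_gt_of_ne hc with h | h
            · exact h1 (hmin i h).symm
            · exact hne (h3 ⟨d, hd⟩ h).symm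
          rwa [← this]
      · intro h
        exact ⟨huv, Or.inl ⟨⟨d, hd⟩, hne, h, fun j hj => hmin j hj⟩⟩
    rw [hsum, neg_one_geom_sum, Matrix.add_apply, Matrix.one_apply_ne huv]
    simp only [adjMat, Matrix.of_apply, hadj, Nat.even_add_one]
    by_cases h : Even d <;> simp [h]

theorem sum_agr_S {r : ℕ} {a : ℕ → ℕ} {j k : ℕ} (h : j ≤ k)
    (f : ((i : Fin r) → Fin (a ((i : ℕ) + 1))) → ℝ)
    (w : (i : Fin r) → Fin (a ((i : ℕ) + 1))) :
    ∑ u, agr j w u * ∑ v, agr k u v * f v = blk r a k * ∑ v, agr j w v * f v := by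
  simp only [Finset.mul_sum]
  rw [Finset.sum_comm]
  refine Finset.sum_congr rfl fun v _ => ?_
  rw [← sum_agr k v, Finset.sum_mul]
  refine Finset.sum_congr rfl fun u _ => ?_
  rw [← mul_assoc, agr_mul h]
  ring

theorem S_zero (m : ℕ) (hm : Even m) (a : ℕ → ℕ) (ha : ∀ k, 2 ≤ a k)
    (f : ((i : Fin (m+1)) → Fin (a ((i : ℕ) + 1))) → ℝ)
    (hf : ∀ u, ∑ k ∈ Finset.range (m+1), (-1:ℝ)^k * ∑ v, agr k u v * f v = 0) (j : ℕ) :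
    j ≤ m → ∀ w, ∑ v, agr j w v * f v = 0 := by
  induction j using Nat.strong_induction_on with
  | _ j ih =>
    intro hj w
    have h1 : ∑ u, agr j w u * ∑ k ∈ Finset.range (m+1), (-1:ℝ)^k * ∑ v, agr k u v * f v = 0 := by
      simp [hf]
    have h2 : ∑ k ∈ Finset.range (m+1), (-1:ℝ)^k *
        ∑ u, agr j w u * ∑ v, agr k u v * f v = 0 := by
      rw [← h1]
      simp only [Finset.mul_sum (Finset.range (m+1))]
      rw [Finset.sum_comm]
      refine Finset.sum_congr rfl fun k _ => ?_
      rw [Finset.mul_sum]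
      exact Finset.sum_congr rfl fun u _ => by ring
    obtain ⟨n, rfl⟩ := Nat.exists_eq_add_of_le hj
    have key : ∀ F : ℕ → ℝ, ∑ k ∈ Finset.range (j+n+1), F k =
        ∑ k ∈ Finset.range j, F k + ∑ i ∈ Finset.range (n+1), F (j+i) := by
      intro F
      rw [add_assoc, Finset.sum_range_add]
    rw [key, Finset.sum_eq_zero, zero_add] at h2
    · simp only [sum_agr_S (Nat.le_add_right j _)] at h2
      have h3 : (-1:ℝ)^j * (∑ i ∈ Finset.range (n+1), (-1:ℝ)^i * blk (j+n+1) a (j+i)) *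
          ∑ v, agr j w v * f v = 0 := by
        rw [← h2, Finset.mul_sum (Finset.range (n+1)), Finset.sum_mul]
        exact Finset.sum_congr rfl fun i _ => by rw [pow_add]; ring
      have h4 := (alt_pos n (fun i => blk (j+n+1) a (j+i)) (fun k _ => blk_pos _ a ha _)
        (fun k hk => blk_lt _ a ha (j+k) (by omega))).1
      rcases mul_eq_zero.1 h3 with h | h
      · exact absurd h (mul_ne_zero (pow_ne_zero _ (by norm_num)) h4.ne')
      · exact h
    · intro k hk
      have hk := Finset.mem_range.1 hk
      simp [ih k hk (by omega)]

/-- Summation over the last coordinate. -/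
noncomputable def lastSum (m : ℕ) (a : ℕ → ℕ) :
    (((i : Fin (m+1)) → Fin (a ((i : ℕ) + 1))) → ℝ) →ₗ[ℝ]
      (((i : Fin m) → Fin (a ((i : ℕ) + 1))) → ℝ) where
  toFun f p := ∑ x : Fin (a (m+1)),
    f (Fin.snoc (α := fun i : Fin (m+1) => Fin (a ((i : ℕ) + 1))) p x)
  map_add' f g := by ext p; simp [Finset.sum_add_distrib]
  map_smul' c f := by ext p; simp [Finset.mul_sum]

theorem lastSum_surj (m : ℕ) (a : ℕ → ℕ) (ha : ∀ k, 2 ≤ a k) :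
    Function.Surjective (lastSum m a) := by
  intro g
  have h0 : 0 < a (m+1) := by have := ha (m+1); omega
  refine ⟨fun u => if u (Fin.last m) = (⟨0, h0⟩ : Fin (a (m+1))) then
    g (Fin.init (α := fun i : Fin (m+1) => Fin (a ((i : ℕ) + 1))) u) else 0, ?_⟩
  ext p
  simp only [lastSum, LinearMap.coe_mk, AddHom.coe_mk, Fin.snoc_last, Fin.init_snoc]
  exact (Finset.sum_ite_eq' Finset.univ (⟨0, h0⟩ : Fin (a (m+1))) (fun _ => g p)).trans (by simp)

theorem lastSum_eq (m : ℕ) (a : ℕ → ℕ)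
    (f : ((i : Fin (m+1)) → Fin (a ((i : ℕ) + 1))) → ℝ)
    (u : (i : Fin (m+1)) → Fin (a ((i : ℕ) + 1))) :
    ∑ v, agr m u v * f v =
      lastSum m a f (Fin.init (α := fun i : Fin (m+1) => Fin (a ((i : ℕ) + 1))) u) := by
  classical
  rw [← (Fin.snocEquiv (fun i : Fin (m+1) => Fin (a ((i : ℕ) + 1)))).sum_comp,
    Fintype.sum_prod_type]
  simp only [lastSum, LinearMap.coe_mk, AddHom.coe_mk]
  refine Finset.sum_congr rfl fun x _ => ?_
  rw [Finset.sum_eq_single (Fin.init (α := fun i : Fin (m+1) => Fin (a ((i : ℕ) + 1))) u)]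
  · have : agr m u ((Fin.snocEquiv (fun i : Fin (m+1) => Fin (a ((i : ℕ) + 1)))) (x, Fin.init u))
        = 1 := by
      unfold agr
      rw [if_pos]
      intro j hj
      obtain ⟨i, rfl⟩ : ∃ i : Fin m, j = i.castSucc := ⟨⟨j, hj⟩, rfl⟩
      simp [Fin.snocEquiv, Fin.init]
    rw [this, one_mul]
    rfl
  · intro p _ hp
    have : agr m u ((Fin.snocEquiv (fun i : Fin (m+1) => Fin (a ((i : ℕ) + 1)))) (x, p)) = 0 := by
      unfold agr
      rw [if_neg]
      intro h
      apply hp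
      funext i
      have := h i.castSucc i.2
      simp [Fin.snocEquiv] at this
      exact this.symm
    rw [this, zero_mul]
  · simp

theorem ker_eq (m : ℕ) (hm : Even m) (a : ℕ → ℕ) (ha : ∀ k, 2 ≤ a k) :
    LinearMap.ker (Matrix.toLin' (adjMat (m+1) a + 1)) = LinearMap.ker (lastSum m a) := by
  have hB : ∀ (f : ((i : Fin (m+1)) → Fin (a ((i : ℕ) + 1))) → ℝ) u,
      Matrix.toLin' (adjMat (m+1) a + 1) f u =
        ∑ k ∈ Finset.range (m+1), (-1:ℝ)^k * ∑ v, agr k u v * f v := by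
    intro f u
    rw [Matrix.toLin'_apply]
    simp only [Matrix.mulVec, dotProduct, entry m hm, Finset.sum_mul, Finset.mul_sum]
    rw [Finset.sum_comm]
    simp only [mul_assoc]
  ext f
  rw [LinearMap.mem_ker, LinearMap.mem_ker]
  constructor
  · intro h
    have h1 := S_zero m hm a ha f (fun u => by rw [← hB, h]; rfl) m le_rfl
    ext p
    have h0 : 0 < a (m+1) := by have := ha (m+1); omega
    have h2 := lastSum_eq m a f
      (Fin.snoc (α := fun i : Fin (m+1) => Fin (a ((i : ℕ) + 1))) p (⟨0, h0⟩ : Fin (a (m+1))))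
    rw [h1, Fin.init_snoc] at h2
    exact h2.symm
  · intro h
    have h1 : ∀ u, ∑ v, agr m u v * f v = 0 := fun u => by rw [lastSum_eq, h]; rfl
    ext u
    rw [hB]
    refine Finset.sum_eq_zero fun k hk => ?_
    have hk := Finset.mem_range.1 hk
    have h2 := sum_agr_S (j := k) (k := m) (by omega) f u
    simp only [h1, mul_zero, Finset.sum_const_zero] at h2
    rcases mul_eq_zero.1 h2.symm with h3 | h3
    · exact absurd h3 (blk_pos _ a ha _).ne'
    · rw [h3, mul_zero]

/-- For `r ≥ 1` odd and `a_i ≥ 2`, the multiplicity of the eigenvalue `-1` of the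
cograph with balanced cotree `T_G(a_1,…,a_{r-1},0|0,…,0,a_r)` is
`a_1 ⋯ a_{r-1} (a_r - 1)`. -/
theorem multiplicity_neg_one_r_odd (r : ℕ) (hr1 : 1 ≤ r) (hr : Odd r)
    (a : ℕ → ℕ) (ha : ∀ k, 2 ≤ a k) :
    Module.finrank ℝ (LinearMap.ker (Matrix.toLin' (adjMat r a + 1))) =
      (∏ k ∈ Finset.Icc 1 (r - 1), a k) * (a r - 1) := by
  obtain ⟨m, rfl⟩ : ∃ m, r = m + 1 := ⟨r - 1, by omega⟩
  have hm : Even m := by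
    rcases Nat.even_or_odd m with h | h
    · exact h
    · exact absurd hr (by simpa [Nat.not_odd_iff_even, Nat.even_add_one] using h)
  rw [ker_eq m hm a ha]
  have h1 := LinearMap.finrank_range_add_finrank_ker (lastSum m a)
  rw [LinearMap.range_eq_top.2 (lastSum_surj m a ha), finrank_top, Module.finrank_fintype_fun_eq_card,
    Module.finrank_fintype_fun_eq_card, Fintype.card_pi, Fintype.card_pi] at h1
  simp only [Fintype.card_fin] at h1
  rw [Fin.prod_univ_castSucc] at h1
  simp only [Fin.val_castSucc, Fin.val_last] at h1
  have h2 : ∏ k ∈ Finset.Icc 1 (m + 1 - 1), a k = ∏ i : Fin m, a ((i:ℕ)+1) := by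
    rw [Fin.prod_univ_eq_prod_range (fun i => a (i+1)) m, Finset.range_eq_Ico, Finset.prod_Ico_add' a 0 m 1]
    congr 1
  rw [h2, Nat.mul_sub, mul_one]
  omega
end

section
/- Let r ≥ 1 and let a_1, …, a_r be integers with a_i ≥ 2 for all i. Then the graph G(a_1,…,a_r) is integral: for every real number μ such that ker(A − μI) ≠ {0}, where A is the real adjacency matrix of G(a_1,…,a_r), there exists an integer m with μ = m. Equivalently, every eigenvalue of the (real symmetric) adjacency matrix of G(a_1,…,a_r) is an integer. -/
open scoped Classical in
/-- The 0/1 matrix of the relation `u` and `v` agree in the first `k` coordinates. -/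
noncomputable def agreeMat (r : ℕ) (a : ℕ → ℕ) (k : ℕ) :
    Matrix ((i : Fin r) → Fin (a ((i : ℕ) + 1))) ((i : Fin r) → Fin (a ((i : ℕ) + 1))) ℝ :=
  Matrix.of fun u v => if (∀ j : Fin r, (j : ℕ) < k → u j = v j) then 1 else 0

/-- Size of the agreement classes. -/
def classSize (r : ℕ) (a : ℕ → ℕ) (k : ℕ) : ℕ :=
  ∏ j : Fin r, if (j : ℕ) < k then 1 else a ((j : ℕ) + 1)

theorem agreeMat_top (r : ℕ) (a : ℕ → ℕ) : agreeMat r a r = 1 := by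
  classical
  ext u v
  simp only [agreeMat, Matrix.of_apply, Matrix.one_apply]
  congr 1
  simp [funext_iff]

theorem card_class (r : ℕ) (a : ℕ → ℕ) (k : ℕ) (v : (i : Fin r) → Fin (a ((i : ℕ) + 1))) :
    ∑ w, agreeMat r a k w v = (classSize r a k : ℝ) := by
  classical
  simp only [agreeMat, Matrix.of_apply, Finset.sum_boole]
  congr 1
  have : (Finset.univ.filter fun w : (i : Fin r) → Fin (a ((i : ℕ) + 1)) =>
      ∀ j : Fin r, (j : ℕ) < k → w j = v j) =
      Fintype.piFinset (fun j : Fin r => if (j : ℕ) < k then {v j} else Finset.univ) := by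
    ext w
    simp only [Finset.mem_filter, Finset.mem_univ, true_and, Fintype.mem_piFinset]
    refine forall_congr' fun j => ?_
    by_cases h : (j : ℕ) < k <;> simp [h]
  rw [this, Fintype.card_piFinset, classSize]
  refine Finset.prod_congr rfl fun j _ => ?_
  split_ifs <;> simp

theorem agreeMat_mul (r : ℕ) (a : ℕ → ℕ) {k i : ℕ} (h : k ≤ i) :
    agreeMat r a k * agreeMat r a i = (classSize r a i : ℝ) • agreeMat r a k := by
  classical
  ext u v
  rw [Matrix.mul_apply, Matrix.smul_apply, ← card_class r a i v, smul_eq_mul, Finset.sum_mul]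
  refine Finset.sum_congr rfl fun w _ => ?_
  by_cases hw : ∀ j : Fin r, (j : ℕ) < i → w j = v j
  · have : agreeMat r a k u w = agreeMat r a k u v := by
      simp only [agreeMat, Matrix.of_apply]
      congr 1
      refine propext (forall_congr' fun j => forall_congr' fun hj => ?_)
      rw [hw j (by omega)]
    rw [this, mul_comm]
  · have : agreeMat r a i w v = 0 := by simp only [agreeMat, Matrix.of_apply, if_neg hw]
    simp [this]

theorem agree_sub (r : ℕ) (a : ℕ → ℕ) (i : Fin r) (u v : (i : Fin r) → Fin (a ((i : ℕ) + 1)))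
    [Decidable (u i ≠ v i ∧ ∀ j : Fin r, (j : ℕ) < (i : ℕ) → u j = v j)] :
    agreeMat r a i u v - agreeMat r a (i + 1) u v =
      if (u i ≠ v i ∧ ∀ j : Fin r, (j : ℕ) < (i : ℕ) → u j = v j) then 1 else 0 := by
  classical
  have key : (∀ j : Fin r, (j : ℕ) < (i : ℕ) + 1 → u j = v j) ↔
      (u i = v i ∧ ∀ j : Fin r, (j : ℕ) < (i : ℕ) → u j = v j) := by
    constructor
    · intro h
      exact ⟨h i (by omega), fun j hj => h j (by omega)⟩
    · rintro ⟨h1, h2⟩ j hj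
      by_cases hji : j = i
      · rw [hji]; exact h1
      · exact h2 j (by have := fun h => hji (Fin.ext h); omega)
  simp only [agreeMat, Matrix.of_apply, key]
  by_cases h1 : u i = v i <;> by_cases h2 : ∀ j : Fin r, (j : ℕ) < (i : ℕ) → u j = v j <;>
    simp [h1, h2]

theorem adjMat_eq (r : ℕ) (a : ℕ → ℕ) :
    adjMat r a = ∑ i : Fin r,
      (if Even (i : ℕ) then (1 : ℝ) else 0) • (agreeMat r a i - agreeMat r a (i + 1)) := by
  classical
  ext u v
  simp only [Matrix.sum_apply, Matrix.smul_apply, Matrix.sub_apply, agree_sub, adjMat,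
    Matrix.of_apply, smul_eq_mul]
  have hadj : (balG r a).Adj u v ↔ ∃ i : Fin r,
      u i ≠ v i ∧ Even (i : ℕ) ∧ ∀ j : Fin r, (j : ℕ) < (i : ℕ) → u j = v j := by
    simp only [balG, SimpleGraph.fromRel_adj]
    constructor
    · rintro ⟨_, h | ⟨i, h1, h2, h3⟩⟩
      · exact h
      · exact ⟨i, h1.symm, h2, fun j hj => (h3 j hj).symm⟩
    · rintro ⟨i, h1, h2, h3⟩
      exact ⟨fun h => h1 (by rw [h]), Or.inl ⟨i, h1, h2, h3⟩⟩
  by_cases h : (balG r a).Adj u v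
  · rw [if_pos h]
    obtain ⟨i, h1, h2, h3⟩ := hadj.1 h
    rw [Finset.sum_eq_single i]
    · rw [if_pos h2, if_pos ⟨h1, h3⟩, one_mul]
    · intro b _ hb
      rw [if_neg (c := _ ∧ _), mul_zero]
      rintro ⟨hb1, hb2⟩
      rcases lt_trichotomy (b : ℕ) (i : ℕ) with hl | hl | hl
      · exact hb1 (h3 b hl)
      · exact hb (Fin.ext hl)
      · exact h1 (hb2 i hl)
    · simp
  · rw [if_neg h, Finset.sum_eq_zero]
    intro i _
    by_cases h2 : Even (i : ℕ)
    · rw [if_neg (c := _ ∧ _), mul_zero]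
      rintro ⟨h1, h3⟩
      exact h (hadj.2 ⟨i, h1, h2, h3⟩)
    · rw [if_neg h2, zero_mul]

/-- For `r ≥ 1` and `a_i ≥ 2`, the cograph with balanced cotree
`T_G(a_1,…,a_{r-1},0|0,…,0,a_r)` is integral: every real number `μ` with
`ker(A - μI) ≠ {0}`, where `A` is the real adjacency matrix, is an integer. -/
theorem balanced_cograph_integral (r : ℕ) (hr1 : 1 ≤ r)
    (a : ℕ → ℕ) (ha : ∀ k, 2 ≤ a k) (μ : ℝ)
    (hμ : LinearMap.ker (Matrix.toLin' (adjMat r a - μ • 1)) ≠ ⊥) :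
    ∃ m : ℤ, μ = (m : ℝ) := by
  classical
  obtain ⟨x, hx, hx0⟩ := (Submodule.ne_bot_iff _).1 hμ
  have hA : (adjMat r a).mulVec x = μ • x := by
    rw [LinearMap.mem_ker, Matrix.toLin'_apply, Matrix.sub_mulVec, Matrix.smul_mulVec,
      Matrix.one_mulVec, sub_eq_zero] at hx
    exact hx
  have hex : ∃ k, (agreeMat r a k).mulVec x ≠ 0 :=
    ⟨r, by rw [agreeMat_top, Matrix.one_mulVec]; exact hx0⟩
  obtain ⟨k, hk, hmin⟩ : ∃ k, (agreeMat r a k).mulVec x ≠ 0 ∧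
      ∀ i < k, (agreeMat r a i).mulVec x = 0 :=
    ⟨Nat.find hex, Nat.find_spec hex, fun i hi => not_not.1 (Nat.find_min hex hi)⟩
  have hS : ∀ i, (agreeMat r a k).mulVec ((agreeMat r a i).mulVec x) =
      (((if k ≤ i then (classSize r a i : ℤ) else 0 : ℤ)) : ℝ) • (agreeMat r a k).mulVec x := by
    intro i
    by_cases h : k ≤ i
    · rw [if_pos h, Matrix.mulVec_mulVec, agreeMat_mul r a h, Matrix.smul_mulVec]
      simp
    · rw [if_neg h, hmin i (by omega)]
      simp
  set c : ℕ → ℤ := fun i => if k ≤ i then (classSize r a i : ℤ) else 0 with hc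
  refine ⟨∑ i : Fin r, (if Even (i : ℕ) then (1 : ℤ) else 0) * (c i - c (i + 1)), ?_⟩
  have h1 := congrArg (agreeMat r a k).mulVec hA
  rw [adjMat_eq, Matrix.mulVec_smul, Matrix.sum_mulVec, Matrix.mulVec_sum] at h1
  simp only [Matrix.smul_mulVec, Matrix.sub_mulVec, Matrix.mulVec_smul, Matrix.mulVec_sub, hS,
    ← sub_smul, smul_smul, ← Finset.sum_smul] at h1
  have h2 := smul_left_injective ℝ hk h1
  rw [← h2]
  simp only [hc]
  push_cast
  rfl
end

section
/- Let t and p be integers with t > p ≥ 1 and t ≥ 2, and let G be the cograph ((tK_1 ⊗ tK_1)) ⊗ K_p on 2t + p vertices, and let A be its real adjacency matrix. Then the dimension of ker(A) equals 2t − 2 and the dimension of ker(A + I) equals p − 1; that is, m(0, G) = 2t − 2 and m(−1, G) = p − 1. -/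
/-- The part of a vertex of `(t K_1 ⊗ t K_1) ⊗ K_p`: `0` for the first independent set
`U_1`, `1` for the second independent set `U_2`, `2` for the clique `W`. -/
def part {t p : ℕ} : (Fin t ⊕ Fin t) ⊕ Fin p → ℕ
  | Sum.inl (Sum.inl _) => 0
  | Sum.inl (Sum.inr _) => 1
  | Sum.inr _ => 2

/-- The cograph `(t K_1 ⊗ t K_1) ⊗ K_p` on `2t + p` vertices: two distinct vertices are
adjacent iff they lie in different parts, or both lie in the clique `W` (part `2`). -/
def joinGraph (t p : ℕ) : SimpleGraph ((Fin t ⊕ Fin t) ⊕ Fin p) :=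
  SimpleGraph.fromRel (fun u v => part u ≠ part v ∨ part u = 2)

open scoped Classical in
/-- The real adjacency matrix of `joinGraph t p`. -/
noncomputable def adjJ (t p : ℕ) :
    Matrix ((Fin t ⊕ Fin t) ⊕ Fin p) ((Fin t ⊕ Fin t) ⊕ Fin p) ℝ :=
  Matrix.of fun u v => if (joinGraph t p).Adj u v then 1 else 0

lemma adjJ_mulVec_W (t p : ℕ) (x : (Fin t ⊕ Fin t) ⊕ Fin p → ℝ) (k : Fin p) :
    (adjJ t p).mulVec x (Sum.inr k) = (∑ i, x (Sum.inl (Sum.inl i))) +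
      (∑ i, x (Sum.inl (Sum.inr i))) + (∑ i, x (Sum.inr i)) - x (Sum.inr k) := by
  have h : ∀ i : Fin p, (if k = i then (0:ℝ) else x (Sum.inr i)) =
      x (Sum.inr i) - if k = i then x (Sum.inr i) else 0 := by
    intro i; split_ifs <;> simp
  simp [Matrix.mulVec, dotProduct, adjJ, joinGraph, part, h, Finset.sum_sub_distrib]
  ring

lemma adjJ_mulVec_U1 (t p : ℕ) (x : (Fin t ⊕ Fin t) ⊕ Fin p → ℝ) (k : Fin t) :
    (adjJ t p).mulVec x (Sum.inl (Sum.inl k)) =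
      (∑ i, x (Sum.inl (Sum.inr i))) + (∑ i, x (Sum.inr i)) := by
  simp [Matrix.mulVec, dotProduct, adjJ, joinGraph, part]

lemma adjJ_mulVec_U2 (t p : ℕ) (x : (Fin t ⊕ Fin t) ⊕ Fin p → ℝ) (k : Fin t) :
    (adjJ t p).mulVec x (Sum.inl (Sum.inr k)) =
      (∑ i, x (Sum.inl (Sum.inl i))) + (∑ i, x (Sum.inr i)) := by
  simp [Matrix.mulVec, dotProduct, adjJ, joinGraph, part]

/-- Coordinates on `W` together with the sums over `U_1` and `U_2`. -/
def mapZero (t p : ℕ) : ((Fin t ⊕ Fin t) ⊕ Fin p → ℝ) →ₗ[ℝ] (Fin p → ℝ) × ℝ × ℝ where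
  toFun x := (fun k => x (Sum.inr k), ∑ i, x (Sum.inl (Sum.inl i)), ∑ i, x (Sum.inl (Sum.inr i)))
  map_add' x y := by simp [Finset.sum_add_distrib]; rfl
  map_smul' c x := by simp [Finset.mul_sum]; rfl

/-- Coordinates on `U_1` and `U_2` together with the sum over `W`. -/
def mapNegOne (t p : ℕ) : ((Fin t ⊕ Fin t) ⊕ Fin p → ℝ) →ₗ[ℝ] (Fin t ⊕ Fin t → ℝ) × ℝ where
  toFun x := (fun k => x (Sum.inl k), ∑ i, x (Sum.inr i))
  map_add' x y := by simp [Finset.sum_add_distrib]; rfl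
  map_smul' c x := by simp [Finset.mul_sum]; rfl

/-- For `t > p ≥ 1` and `t ≥ 2`, the cograph `G = (t K_1 ⊗ t K_1) ⊗ K_p` satisfies
`m(0, G) = 2t - 2` and `m(-1, G) = p - 1`. -/
theorem joinGraph_multiplicities (t p : ℕ) (ht : 2 ≤ t) (hp : 1 ≤ p) (htp : p < t) :
    Module.finrank ℝ (LinearMap.ker (Matrix.toLin' (adjJ t p))) = 2 * t - 2 ∧
    Module.finrank ℝ (LinearMap.ker (Matrix.toLin' (adjJ t p + 1))) = p - 1 := by
  have ht0 : (t : ℝ) ≠ 0 := by positivity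
  have hp0 : (p : ℝ) ≠ 0 := by positivity
  have ht2 : (2 : ℝ) ≤ t := by exact_mod_cast ht
  constructor
  · have hk : LinearMap.ker (Matrix.toLin' (adjJ t p)) = LinearMap.ker (mapZero t p) := by
      ext x
      simp only [LinearMap.mem_ker, Matrix.toLin'_apply, mapZero, LinearMap.coe_mk,
        AddHom.coe_mk, Prod.mk_eq_zero, funext_iff, Pi.zero_apply, Sum.forall,
        adjJ_mulVec_W, adjJ_mulVec_U1, adjJ_mulVec_U2]
      constructor
      · rintro ⟨⟨h1, h2⟩, h3⟩
        have h1 := h1 ⟨0, by omega⟩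
        have h2 := h2 ⟨0, by omega⟩
        set α := ∑ i, x (Sum.inl (Sum.inl i))
        set β := ∑ i, x (Sum.inl (Sum.inr i))
        have hs : ∑ k : Fin p, x (Sum.inr k) = p * (α + β + ∑ i, x (Sum.inr i)) := by
          conv_lhs => rw [Finset.sum_congr rfl (fun k _ => (sub_eq_zero.mp (h3 k)).symm)]
          simp
          ring
        set γ := ∑ i, x (Sum.inr i)
        have hg : (1 + (p : ℝ)) * γ = 0 := by linear_combination hs + p * h1 + p * h2
        have hg : γ = 0 := by
          rcases mul_eq_zero.mp hg with h | h
          · exact absurd h (by positivity)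
          · exact h
        refine ⟨fun k => ?_, ?_, ?_⟩
        · linarith [h3 k]
        · linarith
        · linarith
      · rintro ⟨h1, h2, h3⟩
        simp [h1, h2, h3]
    have hs : Function.Surjective (mapZero t p) := by
      rintro ⟨c, a, b⟩
      refine ⟨Sum.elim (Sum.elim (fun _ => a / t) (fun _ => b / t)) c, ?_⟩
      simp [mapZero, mul_div_cancel₀, ht0]
    have h := (mapZero t p).finrank_range_add_finrank_ker
    rw [LinearMap.range_eq_top.mpr hs] at h
    simp at h
    rw [hk]
    omega
  · have hk : LinearMap.ker (Matrix.toLin' (adjJ t p + 1)) = LinearMap.ker (mapNegOne t p) := by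
      ext x
      simp only [LinearMap.mem_ker, Matrix.toLin'_apply, mapNegOne, LinearMap.coe_mk,
        AddHom.coe_mk, Prod.mk_eq_zero, funext_iff, Pi.zero_apply, Sum.forall,
        Matrix.add_mulVec, Matrix.one_mulVec, Pi.add_apply,
        adjJ_mulVec_W, adjJ_mulVec_U1, adjJ_mulVec_U2]
      constructor
      · rintro ⟨⟨h1, h2⟩, h3⟩
        have h3 := h3 ⟨0, by omega⟩
        set γ := ∑ i, x (Sum.inr i)
        have e1 : ∑ i : Fin t, x (Sum.inl (Sum.inl i)) =
            t * -((∑ i, x (Sum.inl (Sum.inr i))) + γ) := by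
          rw [Finset.sum_congr rfl (fun k _ => (neg_eq_of_add_eq_zero_right (h1 k)).symm)]
          simp
          ring
        have e2 : ∑ i : Fin t, x (Sum.inl (Sum.inr i)) =
            t * -((∑ i, x (Sum.inl (Sum.inl i))) + γ) := by
          rw [Finset.sum_congr rfl (fun k _ => (neg_eq_of_add_eq_zero_right (h2 k)).symm)]
          simp
          ring
        set α := ∑ i, x (Sum.inl (Sum.inl i))
        set β := ∑ i, x (Sum.inl (Sum.inr i))
        have hne : (t : ℝ) - 1 ≠ 0 := by linarith
        have ha : α = 0 := by
          have : ((t : ℝ) - 1) * α = 0 := by linear_combination t * h3 - e1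
          exact (mul_eq_zero.mp this).resolve_left hne
        have hb : β = 0 := by
          have : ((t : ℝ) - 1) * β = 0 := by linear_combination t * h3 - e2
          exact (mul_eq_zero.mp this).resolve_left hne
        have hg : γ = 0 := by linarith
        refine ⟨⟨fun k => ?_, fun k => ?_⟩, hg⟩
        · linarith [h1 k]
        · linarith [h2 k]
      · rintro ⟨⟨h1, h2⟩, h3⟩
        simp [h1, h2, h3]
    have hs : Function.Surjective (mapNegOne t p) := by
      rintro ⟨c, a⟩
      refine ⟨Sum.elim c (fun _ => a / p), ?_⟩
      simp [mapNegOne, mul_div_cancel₀, hp0]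
    have h := (mapNegOne t p).finrank_range_add_finrank_ker
    rw [LinearMap.range_eq_top.mpr hs] at h
    simp at h
    rw [hk]
    omega
end

section
/- Let t and p be integers with t > p ≥ 1 and t ≥ 2, and let G be the cograph ((tK_1 ⊗ tK_1)) ⊗ K_p on 2t + p vertices, with real adjacency matrix A. Then every eigenvalue μ of A satisfies −t ≤ μ ≤ t(p+1); that is, the smallest eigenvalue of G is at least −t and the largest eigenvalue of G is at most t(p+1). -/
/-- For `t > p ≥ 1` and `t ≥ 2`, every eigenvalue `μ` of the cograph
`G = (t K_1 ⊗ t K_1) ⊗ K_p` satisfies `-t ≤ μ ≤ t(p+1)`. -/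
theorem joinGraph_eigenvalue_bounds (t p : ℕ) (ht : 2 ≤ t) (hp : 1 ≤ p) (htp : p < t)
    (μ : ℝ) (hμ : LinearMap.ker (Matrix.toLin' (adjJ t p - μ • 1)) ≠ ⊥) :
    -(t : ℝ) ≤ μ ∧ μ ≤ (t : ℝ) * ((p : ℝ) + 1) := by
  by_contra hcon
  apply hμ
  rw [LinearMap.ker_eq_bot']
  intro v hv
  have hpR : (1 : ℝ) ≤ p := by exact_mod_cast hp
  have htR : (2 : ℝ) ≤ t := by exact_mod_cast ht
  have htpR : (p : ℝ) + 1 ≤ t := by exact_mod_cast htp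
  have hcase : μ < -(t : ℝ) ∨ (t : ℝ) * ((p : ℝ) + 1) < μ := by
    by_contra! h
    exact hcon h
  set a : ℝ := ∑ i : Fin t, v (Sum.inl (Sum.inl i)) with ha
  set b : ℝ := ∑ i : Fin t, v (Sum.inl (Sum.inr i)) with hb
  set c : ℝ := ∑ i : Fin p, v (Sum.inr i) with hc
  have key : ∀ x, ∑ y, adjJ t p x y * v y = μ * v x := by
    intro x
    have h := congrFun hv x
    rw [Matrix.toLin'_apply, Matrix.sub_mulVec, Matrix.smul_mulVec, Matrix.one_mulVec] at h
    simp only [Pi.sub_apply, Pi.smul_apply, Pi.zero_apply, smul_eq_mul] at h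
    have h2 : (adjJ t p).mulVec v x = μ * v x := by linarith
    exact h2
  have e1 : ∀ i, μ * v (Sum.inl (Sum.inl i)) = b + c := by
    intro i
    rw [← key]
    simp [Fintype.sum_sum_type, adjJ, joinGraph, part, hb, hc]
  have e2 : ∀ i, μ * v (Sum.inl (Sum.inr i)) = a + c := by
    intro i
    rw [← key]
    simp [Fintype.sum_sum_type, adjJ, joinGraph, part, ha, hc]
  have e3 : ∀ i, (μ + 1) * v (Sum.inr i) = a + b + c := by
    intro i
    have h : a + b + (c - v (Sum.inr i)) = μ * v (Sum.inr i) := by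
      rw [← key]
      have : c - v (Sum.inr i) = ∑ j, if i = j then 0 else v (Sum.inr j) := by
        have h3 : ∀ j, (if i = j then 0 else v (Sum.inr j))
            = v (Sum.inr j) - if i = j then v (Sum.inr j) else 0 := by
          intro j
          split_ifs <;> simp
        simp [h3, Finset.sum_sub_distrib, hc]
      rw [this]
      simp [Fintype.sum_sum_type, adjJ, joinGraph, part, ha, hb]
    linarith
  have s1 : μ * a = t * (b + c) := by
    rw [ha, Finset.mul_sum, Finset.sum_congr rfl (fun i _ => e1 i)]; simp; ring
  have s2 : μ * b = t * (a + c) := by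
    rw [hb, Finset.mul_sum, Finset.sum_congr rfl (fun i _ => e2 i)]; simp; ring
  have s3 : (μ + 1) * c = p * (a + b + c) := by
    conv_lhs => rw [hc]
    rw [Finset.mul_sum, Finset.sum_congr rfl (fun i _ => e3 i)]; simp; ring
  clear_value a b c
  have n0 : μ ≠ 0 := by
    rcases hcase with h | h
    · linarith
    · nlinarith
  have n1 : μ + 1 ≠ 0 := by
    rcases hcase with h | h
    · linarith
    · nlinarith
  have nt : μ + t ≠ 0 := by
    rcases hcase with h | h
    · linarith
    · nlinarith
  have np : μ + 1 - p ≠ 0 := by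
    rcases hcase with h | h
    · linarith
    · nlinarith
  have nq : (μ - t) * (μ + 1 - p) - 2 * p * t ≠ 0 := by
    apply ne_of_gt
    rcases hcase with h | h
    · nlinarith [mul_pos (show (0 : ℝ) < -t - μ by linarith) (show (0 : ℝ) < -t - μ by linarith)]
    · have h1 : (t : ℝ) * p < μ - t := by linarith
      have h2 : (2 : ℝ) ≤ μ + 1 - p := by nlinarith
      have h3 : (0 : ℝ) < t * p := by positivity
      nlinarith
  have hab : a = b := by
    have : (μ + t) * (a - b) = 0 := by linear_combination s1 - s2
    rcases mul_eq_zero.mp this with h | h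
    · exact absurd h nt
    · linarith
  subst hab
  have ha0 : a = 0 := by
    have : ((μ - t) * (μ + 1 - p) - 2 * p * t) * a = 0 := by
      linear_combination (μ + 1 - p) * s1 + t * s3
    exact (mul_eq_zero.mp this).resolve_left nq
  subst ha0
  have hc0 : c = 0 := by
    have : (μ + 1 - p) * c = 0 := by linear_combination s3
    exact (mul_eq_zero.mp this).resolve_left np
  subst hc0
  funext x
  rcases x with (i | i) | i
  · have := e1 i
    simpa [n0] using this
  · have := e2 i
    simpa [n0] using this
  · have := e3 i
    simpa [n1] using this
end
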